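/- Let α = [0; a₁, a₂, …] ∈ (0,1) be irrational with convergents pₙ/qₙ and θₙ = qₙα − pₙ, and let β ∈ 𝕋 have representation β = Σ_{k=0}^∞ d_k θ_k with digits satisfying 0 ≤ d₀ < a₁, 0 ≤ d_k ≤ a_{k+1}, and d_k = a_{k+1} ⇒ d_{k−1} = 0 for k ≥ 1. If the support supp(β) = {k : d_k ≠ 0} has natural density 0, then β ∈ t^s_{(qₙ)}(𝕋), i.e., qₙβ → 0 statistically in 𝕋. -/

import Mathlib

open Filter Topology

noncomputable section

/-- The circle group `𝕋 = ℝ/ℤ`. -/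
abbrev Circle1 : Type := AddCircle (1 : ℝ)

/-- A set of naturals has natural density zero. -/
def DensityZero (A : Set ℕ) : Prop :=
  Tendsto (fun n : ℕ => ((A ∩ Set.Icc 1 n).ncard : ℝ) / n) atTop (𝓝 0)

/-- Statistical convergence to `0` of a sequence in the circle. -/
def StatTendstoZero (x : ℕ → Circle1) : Prop :=
  ∀ ε : ℝ, 0 < ε → DensityZero {n : ℕ | ε ≤ ‖x n‖}

/-- The characterized subgroup `t_(a_n)(𝕋)`. -/
def charSet (a : ℕ → ℤ) : Set Circle1 :=
  {x : Circle1 | Tendsto (fun n : ℕ => a n • x) atTop (𝓝 0)}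

/-- The statistically characterized subgroup `t^s_(a_n)(𝕋)`. -/
def statCharSet (a : ℕ → ℤ) : Set Circle1 :=
  {x : Circle1 | StatTendstoZero (fun n : ℕ => a n • x)}

namespace CF

/-- Gauss-map orbit of `α`: `G α 0 = α`, `G α (n+1) = {1 / G α n}`. -/
def G (α : ℝ) : ℕ → ℝ
  | 0 => α
  | n + 1 => Int.fract (G α n)⁻¹

/-- The partial quotients of the regular continued fraction `α = [0; a 1, a 2, …]`
(with the convention `a 0 = 0`). -/
def a (α : ℝ) : ℕ → ℕ
  | 0 => 0
  | n + 1 => ⌊(G α n)⁻¹⌋₊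

/-- Denominators of the convergents of the continued fraction of `α`. -/
def q (α : ℝ) : ℕ → ℕ
  | 0 => 1
  | 1 => a α 1
  | (n + 2) => a α (n + 2) * q α (n + 1) + q α n

/-- Numerators of the convergents of the continued fraction of `α`. -/
def p (α : ℝ) : ℕ → ℕ
  | 0 => 0
  | 1 => 1
  | (n + 2) => a α (n + 2) * p α (n + 1) + p α n

/-- `θ n = q n * α - p n`. -/
def θ (α : ℝ) (n : ℕ) : ℝ := (q α n : ℝ) * α - (p α n : ℝ)

end CF

open CF

/-!
Modulo 1 we have `θₖ = qₖ α`, so `qₙ θₖ = qₖ θₙ` in the circle. If the digits of `β` vanish within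
distance `2j` of `n`, then `qₙ β` splits, modulo 1, into a head `θₙ ∑ dₖ qₖ` over `k < n - 2j` and
a tail `qₙ ∑ dₖ θₖ` over `k > n + 2j`. The recurrences telescope and bound both digit sums, by
multiples of `q_{n-2j}` and of `|θ_{n+2j}|`. As `qₖ` at least doubles every two steps and
`qₖ |θₖ| ≤ 1`, both parts are `O(2⁻ʲ)`. Thus `‖qₙ β‖` can exceed a given `ε` only for `n` within a
bounded distance of the support, and such `n` have density zero.
-/

namespace DensityZero

variable {A B : Set ℕ}

lemma of_ncard_le (hA : DensityZero A) (C c : ℕ)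
    (h : ∀ N, (B ∩ Set.Icc 1 N).ncard ≤ C * (A ∩ Set.Icc 1 N).ncard + c) : DensityZero B := by
  have hlim : Tendsto (fun N : ℕ => (C : ℝ) * (((A ∩ Set.Icc 1 N).ncard : ℝ) / N) + (c : ℝ) / N)
      atTop (𝓝 0) := by
    simpa using (hA.const_mul (C : ℝ)).add (tendsto_const_div_atTop_nhds_zero_nat (c : ℝ))
  refine squeeze_zero (fun N => by positivity) (fun N => ?_) hlim
  rw [← mul_div_assoc, ← add_div]
  gcongr
  exact_mod_cast h N

lemma mono (hA : DensityZero A) (hBA : B ⊆ A) : DensityZero B :=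
  hA.of_ncard_le 1 0 fun N => by
    simpa using Set.ncard_le_ncard (Set.inter_subset_inter_left _ hBA)
      ((Set.finite_Icc 1 N).inter_of_right A)

end DensityZero

lemma ncard_inter_Icc_zero_add_le (A : Set ℕ) (m N : ℕ) :
    (A ∩ Set.Icc 0 (N + m)).ncard ≤ (A ∩ Set.Icc 1 N).ncard + (m + 1) := by
  have hsub : A ∩ Set.Icc 0 (N + m) ⊆ (A ∩ Set.Icc 1 N) ∪ insert 0 (Set.Ioc N (N + m)) := by
    rintro k ⟨hkA, hk⟩
    simp only [Set.mem_Icc, Set.mem_union, Set.mem_inter_iff, Set.mem_insert_iff, Set.mem_Ioc,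
      hkA, true_and] at hk ⊢
    omega
  have hfin : ((A ∩ Set.Icc 1 N) ∪ insert 0 (Set.Ioc N (N + m))).Finite :=
    ((Set.finite_Icc 1 N).inter_of_right A).union ((Set.finite_Ioc N (N + m)).insert 0)
  calc (A ∩ Set.Icc 0 (N + m)).ncard
      ≤ (A ∩ Set.Icc 1 N).ncard + (insert 0 (Set.Ioc N (N + m))).ncard :=
        (Set.ncard_le_ncard hsub hfin).trans (Set.ncard_union_le _ _)
    _ ≤ (A ∩ Set.Icc 1 N).ncard + (m + 1) := by
        gcongr
        refine (Set.ncard_insert_le _ _).trans_eq ?_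
        rw [← Finset.coe_Ioc, Set.ncard_coe_finset, Nat.card_Ioc, Nat.add_sub_cancel_left]

lemma ncard_biUnion_Icc_inter_le (A : Set ℕ) (m N : ℕ) :
    ((⋃ k ∈ A, Set.Icc (k - m) (k + m)) ∩ Set.Icc 1 N).ncard ≤
      (A ∩ Set.Icc 0 (N + m)).ncard * (2 * m + 1) := by
  have hfin : (A ∩ Set.Icc 0 (N + m)).Finite := (Set.finite_Icc 0 (N + m)).inter_of_right A
  have hsub : (⋃ k ∈ A, Set.Icc (k - m) (k + m)) ∩ Set.Icc 1 N ⊆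
      (hfin.toFinset.biUnion fun k => Finset.Icc (k - m) (k + m) : Finset ℕ) := by
    rintro n ⟨hn, hnN⟩
    simp only [Set.mem_iUnion, Set.mem_Icc, exists_prop, Finset.coe_biUnion,
      Set.Finite.coe_toFinset, Set.mem_inter_iff, Finset.coe_Icc] at hn hnN ⊢
    obtain ⟨k, hkA, hk⟩ := hn
    exact ⟨k, ⟨hkA, by omega⟩, hk⟩
  calc ((⋃ k ∈ A, Set.Icc (k - m) (k + m)) ∩ Set.Icc 1 N).ncard
      ≤ (hfin.toFinset.biUnion fun k => Finset.Icc (k - m) (k + m)).card := by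
        rw [← Set.ncard_coe_finset]
        exact Set.ncard_le_ncard hsub (Finset.finite_toSet _)
    _ ≤ hfin.toFinset.card * (2 * m + 1) :=
        Finset.card_biUnion_le_card_mul _ _ _ fun k _ => by rw [Nat.card_Icc]; omega
    _ = (A ∩ Set.Icc 0 (N + m)).ncard * (2 * m + 1) := by rw [Set.ncard_eq_toFinset_card _ hfin]

lemma DensityZero.biUnion_Icc {A : Set ℕ} (hA : DensityZero A) (m : ℕ) :
    DensityZero (⋃ k ∈ A, Set.Icc (k - m) (k + m)) :=
  hA.of_ncard_le (2 * m + 1) ((2 * m + 1) * (m + 1)) fun N => by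
    rw [← mul_add, mul_comm]
    exact (ncard_biUnion_Icc_inter_le A m N).trans
      (Nat.mul_le_mul_right _ (ncard_inter_Icc_zero_add_le A m N))

lemma norm_coe_addCircle_le_abs {p : ℝ} (x : ℝ) : ‖(x : AddCircle p)‖ ≤ |x| :=
  QuotientAddGroup.norm_mk_le_norm

namespace CF

lemma irrational_G {α : ℝ} (hirr : Irrational α) : ∀ n, Irrational (G α n)
  | 0 => hirr
  | n + 1 => (irrational_G hirr n).inv.sub_intCast ⌊(G α n)⁻¹⌋

lemma q_add_two (α : ℝ) (n : ℕ) : q α (n + 2) = a α (n + 2) * q α (n + 1) + q α n := rfl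

lemma θ_add_two (α : ℝ) (n : ℕ) : θ α (n + 2) = a α (n + 2) * θ α (n + 1) + θ α n := by
  simp only [θ, q, p]
  push_cast
  ring

lemma coe_θ (α : ℝ) (n : ℕ) : (θ α n : Circle1) = q α n • (α : Circle1) := by
  have hp : ((p α n : ℝ) : Circle1) = 0 := (AddCircle.coe_eq_zero_iff 1).2 ⟨p α n, by simp⟩
  rw [θ, AddCircle.coe_sub, hp, sub_zero, ← nsmul_eq_mul, AddCircle.coe_nsmul]

lemma q_smul_coe_θ (α : ℝ) (n k : ℕ) :
    q α n • (θ α k : Circle1) = q α k • (θ α n : Circle1) := by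
  rw [coe_θ, coe_θ, smul_comm]

lemma q_smul_coe_sum (α : ℝ) (s : Finset ℕ) (d : ℕ → ℤ) (n : ℕ) :
    q α n • ((∑ k ∈ s, (d k : ℝ) * θ α k : ℝ) : Circle1) =
      (((∑ k ∈ s, (d k : ℝ) * q α k) * θ α n : ℝ) : Circle1) := by
  have hterm (k : ℕ) : q α n • (((d k : ℝ) * θ α k : ℝ) : Circle1) =
      (((d k : ℝ) * q α k * θ α n : ℝ) : Circle1) := by
    rw [mul_assoc, ← nsmul_eq_mul (q α k), ← zsmul_eq_mul, ← zsmul_eq_mul, AddCircle.coe_zsmul,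
      AddCircle.coe_zsmul, AddCircle.coe_nsmul, smul_comm, q_smul_coe_θ]
  rw [Finset.sum_mul, QuotientAddGroup.mk_sum, QuotientAddGroup.mk_sum, Finset.smul_sum]
  exact Finset.sum_congr rfl fun k _ => hterm k

lemma sum_range_a_mul_q_add_one (α : ℝ) (N : ℕ) :
    ∑ k ∈ Finset.range (N + 1), a α (k + 1) * q α k + 1 = q α (N + 1) + q α N := by
  induction N with
  | zero => simp [q]
  | succ N ih =>
    rw [Finset.sum_range_succ, q_add_two]
    linarith

lemma norm_digit_mul_θ_le {α : ℝ} {C : ℕ} {d : ℕ → ℤ} (hd : ∀ k, |d k| ≤ C * a α (k + 1))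
    (k : ℕ) : ‖(d k : ℝ) * θ α k‖ ≤ C * (a α (k + 1) * |θ α k|) := by
  rw [norm_mul, Real.norm_eq_abs, Real.norm_eq_abs, ← mul_assoc]
  gcongr
  exact_mod_cast hd k

section Irrational

variable {α : ℝ} (hα : α ∈ Set.Ioo (0 : ℝ) 1) (hirr : Irrational α)
include hα hirr

lemma G_mem_Ioo (n : ℕ) : G α n ∈ Set.Ioo (0 : ℝ) 1 := by
  cases n with
  | zero => exact hα
  | succ n =>
    exact ⟨(Int.fract_nonneg _).lt_of_ne' (irrational_G hirr (n + 1)).ne_zero, Int.fract_lt_one _⟩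

lemma a_add_G_mul_G (n : ℕ) : ((a α (n + 1) : ℝ) + G α (n + 1)) * G α n = 1 := by
  have hpos : 0 < G α n := (G_mem_Ioo hα hirr n).1
  have ha : (a α (n + 1) : ℝ) = (⌊(G α n)⁻¹⌋ : ℤ) :=
    natCast_floor_eq_intCast_floor (inv_pos.2 hpos).le
  rw [ha, G, Int.floor_add_fract, inv_mul_cancel₀ hpos.ne']

lemma one_le_a (n : ℕ) : 1 ≤ a α (n + 1) := by
  obtain ⟨hpos, hlt⟩ := G_mem_Ioo hα hirr n
  exact Nat.le_floor (by simpa using (one_le_inv₀ hpos).2 hlt.le)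

lemma q_add_q_succ_le (n : ℕ) : q α n + q α (n + 1) ≤ q α (n + 2) := by
  rw [q_add_two, add_comm]
  gcongr
  exact Nat.le_mul_of_pos_left _ (one_le_a hα hirr (n + 1))

lemma monotone_q : Monotone (q α) := by
  refine monotone_nat_of_le_succ fun n => ?_
  cases n with
  | zero => exact one_le_a hα hirr 0
  | succ n => exact le_of_add_le_right (q_add_q_succ_le hα hirr n)

lemma two_pow_mul_q_le (n j : ℕ) : 2 ^ j * q α n ≤ q α (n + 2 * j) := by
  induction j with
  | zero => simp
  | succ j ih =>
    calc 2 ^ (j + 1) * q α n = 2 ^ j * q α n + 2 ^ j * q α n := by ring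
      _ ≤ q α (n + 2 * j) + q α (n + 2 * j + 1) :=
        add_le_add ih (ih.trans (monotone_q hα hirr (Nat.le_succ _)))
      _ ≤ q α (n + 2 * (j + 1)) := q_add_q_succ_le hα hirr (n + 2 * j)

lemma θ_succ (n : ℕ) : θ α (n + 1) = -(G α (n + 1) * θ α n) := by
  induction n with
  | zero =>
    have h : (a α 1 + G α 1) * α = 1 := a_add_G_mul_G hα hirr 0
    simp only [θ, q, p, zero_add, Nat.cast_one, Nat.cast_zero]
    linear_combination h
  | succ n ih =>
    rw [θ_add_two, ih]
    linear_combination (-θ α n) * a_add_G_mul_G hα hirr (n + 1)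

lemma abs_θ_succ (n : ℕ) : |θ α (n + 1)| = G α (n + 1) * |θ α n| := by
  rw [θ_succ hα hirr, abs_neg, abs_mul, abs_of_pos (G_mem_Ioo hα hirr _).1]

lemma abs_θ_succ_le (n : ℕ) : |θ α (n + 1)| ≤ |θ α n| := by
  rw [abs_θ_succ hα hirr]
  exact mul_le_of_le_one_left (abs_nonneg _) (G_mem_Ioo hα hirr _).2.le

lemma a_mul_abs_θ_add_abs_θ (n : ℕ) :
    a α (n + 2) * |θ α (n + 1)| + |θ α (n + 2)| = |θ α n| := by
  rw [abs_θ_succ hα hirr (n + 1), abs_θ_succ hα hirr n]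
  linear_combination |θ α n| * a_add_G_mul_G hα hirr (n + 1)

lemma q_succ_mul_abs_θ_add (n : ℕ) :
    q α (n + 1) * |θ α n| + q α n * |θ α (n + 1)| = 1 := by
  induction n with
  | zero =>
    have h : (a α 1 + G α 1) * α = 1 := a_add_G_mul_G hα hirr 0
    have hθ : |θ α 0| = α := by simp [θ, q, p, abs_of_pos hα.1]
    rw [abs_θ_succ hα hirr 0, hθ]
    simp only [q, zero_add, Nat.cast_one]
    linear_combination h
  | succ n ih =>
    rw [q_add_two]
    push_cast
    linear_combination ih + (q α (n + 1) : ℝ) * a_mul_abs_θ_add_abs_θ hα hirr n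

lemma q_mul_abs_θ_le_one (n : ℕ) : q α n * |θ α n| ≤ 1 :=
  calc (q α n : ℝ) * |θ α n| ≤ q α (n + 1) * |θ α n| := by
        gcongr
        exact monotone_q hα hirr n.le_succ
    _ ≤ q α (n + 1) * |θ α n| + q α n * |θ α (n + 1)| :=
        le_add_of_nonneg_right (by positivity)
    _ = 1 := q_succ_mul_abs_θ_add hα hirr n

lemma q_mul_abs_θ_add_le (n j : ℕ) : q α n * |θ α (n + 2 * j)| ≤ (1 / 2) ^ j := by
  rw [one_div_pow, le_div_iff₀' (by positivity), ← mul_assoc]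
  calc (2 : ℝ) ^ j * q α n * |θ α (n + 2 * j)| ≤ q α (n + 2 * j) * |θ α (n + 2 * j)| := by
        gcongr
        exact_mod_cast two_pow_mul_q_le hα hirr n j
    _ ≤ 1 := q_mul_abs_θ_le_one hα hirr _

lemma sum_range_a_mul_q_le (N : ℕ) :
    ∑ k ∈ Finset.range N, a α (k + 1) * q α k ≤ 2 * q α N := by
  cases N with
  | zero => simp
  | succ N =>
    have hsum := sum_range_a_mul_q_add_one α N
    have hmono := monotone_q hα hirr N.le_succ
    lia

lemma sum_range_a_mul_abs_θ_add (N K : ℕ) :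
    ∑ k ∈ Finset.range K, a α (N + k + 2) * |θ α (N + k + 1)| +
      (|θ α (N + K)| + |θ α (N + K + 1)|) = |θ α N| + |θ α (N + 1)| := by
  induction K with
  | zero => simp
  | succ K ih =>
    rw [Finset.sum_range_succ, ← add_assoc N]
    linear_combination ih + a_mul_abs_θ_add_abs_θ hα hirr (N + K)

lemma sum_range_a_mul_abs_θ_le (N K : ℕ) :
    ∑ k ∈ Finset.range K, a α (N + k + 2) * |θ α (N + k + 1)| ≤ 2 * |θ α N| := by
  linarith [sum_range_a_mul_abs_θ_add hα hirr N K, abs_θ_succ_le hα hirr N,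
    abs_nonneg (θ α (N + K)), abs_nonneg (θ α (N + K + 1))]

lemma summable_a_mul_abs_θ (N : ℕ) :
    Summable fun k => a α (N + k + 2) * |θ α (N + k + 1)| :=
  summable_of_sum_range_le (fun _ => by positivity) (sum_range_a_mul_abs_θ_le hα hirr N)

section Digits

variable {C : ℕ} {d : ℕ → ℤ} (hd : ∀ k, |d k| ≤ C * a α (k + 1))
include hd

lemma abs_sum_range_digit_mul_q_le (N : ℕ) :
    |∑ k ∈ Finset.range N, (d k : ℝ) * q α k| ≤ C * (2 * q α N) :=
  calc |∑ k ∈ Finset.range N, (d k : ℝ) * q α k|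
      ≤ ∑ k ∈ Finset.range N, C * (a α (k + 1) * q α k : ℝ) := by
        refine (Finset.abs_sum_le_sum_abs _ _).trans (Finset.sum_le_sum fun k _ => ?_)
        rw [abs_mul, Nat.abs_cast, ← mul_assoc]
        gcongr
        exact_mod_cast hd k
    _ = C * ∑ k ∈ Finset.range N, (a α (k + 1) * q α k : ℝ) := by rw [Finset.mul_sum]
    _ ≤ C * (2 * q α N) := by
        gcongr
        exact_mod_cast sum_range_a_mul_q_le hα hirr N

lemma summable_digit_mul_θ : Summable fun k => (d k : ℝ) * θ α k := by
  have hsum : Summable fun k => a α (k + 1) * |θ α k| :=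
    (summable_nat_add_iff 1).1 (by simpa using summable_a_mul_abs_θ hα hirr 0)
  exact .of_norm_bounded (hsum.mul_left (C : ℝ)) (norm_digit_mul_θ_le hd)

lemma abs_tsum_digit_mul_θ_le (N : ℕ) :
    |∑' k, (d (N + k + 1) : ℝ) * θ α (N + k + 1)| ≤ C * (2 * |θ α N|) :=
  calc |∑' k, (d (N + k + 1) : ℝ) * θ α (N + k + 1)|
      ≤ C * ∑' k, a α (N + k + 2) * |θ α (N + k + 1)| :=
        tsum_of_norm_bounded ((summable_a_mul_abs_θ hα hirr N).hasSum.mul_left (C : ℝ))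
          fun k => norm_digit_mul_θ_le hd (N + k + 1)
    _ ≤ C * (2 * |θ α N|) := by
        gcongr
        exact Real.tsum_le_of_sum_range_le (fun _ => by positivity)
          (sum_range_a_mul_abs_θ_le hα hirr N)

lemma norm_q_smul_head_le (n j : ℕ) :
    ‖q α n • ((∑ k ∈ Finset.range (n - 2 * j), (d k : ℝ) * θ α k : ℝ) : Circle1)‖ ≤
      2 * C * (1 / 2) ^ j := by
  rcases le_total n (2 * j) with hle | hle
  · simp only [Nat.sub_eq_zero_of_le hle, Finset.range_zero, Finset.sum_empty,
      AddCircle.coe_zero, smul_zero, norm_zero]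
    positivity
  obtain ⟨m, rfl⟩ := Nat.exists_eq_add_of_le' hle
  rw [Nat.add_sub_cancel, q_smul_coe_sum]
  calc ‖(((∑ k ∈ Finset.range m, (d k : ℝ) * q α k) * θ α (m + 2 * j) : ℝ) : Circle1)‖
      ≤ |∑ k ∈ Finset.range m, (d k : ℝ) * q α k| * |θ α (m + 2 * j)| :=
        (norm_coe_addCircle_le_abs _).trans_eq (abs_mul _ _)
    _ ≤ C * (2 * q α m) * |θ α (m + 2 * j)| := by
        gcongr
        exact abs_sum_range_digit_mul_q_le hα hirr hd m
    _ = 2 * C * (q α m * |θ α (m + 2 * j)|) := by ring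
    _ ≤ 2 * C * (1 / 2) ^ j := by
        gcongr
        exact q_mul_abs_θ_add_le hα hirr m j

lemma norm_q_smul_tail_le (n j : ℕ) :
    ‖q α n • ((∑' k, (d (n + 2 * j + k + 1) : ℝ) * θ α (n + 2 * j + k + 1) : ℝ) : Circle1)‖ ≤
      2 * C * (1 / 2) ^ j := by
  rw [← AddCircle.coe_nsmul, nsmul_eq_mul]
  calc ‖((q α n * ∑' k, (d (n + 2 * j + k + 1) : ℝ) * θ α (n + 2 * j + k + 1) : ℝ) : Circle1)‖
      ≤ q α n * |∑' k, (d (n + 2 * j + k + 1) : ℝ) * θ α (n + 2 * j + k + 1)| :=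
        (norm_coe_addCircle_le_abs _).trans_eq (by rw [abs_mul, Nat.abs_cast])
    _ ≤ q α n * (C * (2 * |θ α (n + 2 * j)|)) := by
        gcongr
        exact abs_tsum_digit_mul_θ_le hα hirr hd (n + 2 * j)
    _ = 2 * C * (q α n * |θ α (n + 2 * j)|) := by ring
    _ ≤ 2 * C * (1 / 2) ^ j := by
        gcongr
        exact q_mul_abs_θ_add_le hα hirr n j

lemma norm_q_smul_tsum_le {n j : ℕ}
    (hzero : ∀ k ∈ Set.Icc (n - 2 * j) (n + 2 * j), d k = 0) :
    ‖q α n • ((∑' k, (d k : ℝ) * θ α k : ℝ) : Circle1)‖ ≤ 4 * C * (1 / 2) ^ j := by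
  have hhead : ∑ k ∈ Finset.range (n + 2 * j + 1), (d k : ℝ) * θ α k =
      ∑ k ∈ Finset.range (n - 2 * j), (d k : ℝ) * θ α k := by
    refine (Finset.sum_subset (Finset.range_mono (by omega)) fun k hk hk' => ?_).symm
    rw [Finset.mem_range] at hk hk'
    rw [hzero k ⟨by omega, by omega⟩, Int.cast_zero, zero_mul]
  have hsplit : ∑' k, (d k : ℝ) * θ α k = ∑ k ∈ Finset.range (n - 2 * j), (d k : ℝ) * θ α k +
      ∑' k, (d (n + 2 * j + k + 1) : ℝ) * θ α (n + 2 * j + k + 1) := by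
    rw [← (summable_digit_mul_θ hα hirr hd).sum_add_tsum_nat_add (n + 2 * j + 1), hhead]
    simp only [← add_assoc, add_comm _ (n + 2 * j)]
  rw [hsplit, AddCircle.coe_add, smul_add]
  linarith [norm_add_le_of_le (norm_q_smul_head_le hα hirr hd n j)
    (norm_q_smul_tail_le hα hirr hd n j)]

end Digits

end Irrational

end CF

theorem stmt_7_general {α : ℝ} (hα : α ∈ Set.Ioo (0 : ℝ) 1) (hirr : Irrational α)
    {C : ℕ} {d : ℕ → ℤ} (hd : ∀ k, |d k| ≤ C * a α (k + 1))
    (hsupp : DensityZero {k : ℕ | d k ≠ 0}) :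
    ((∑' k : ℕ, (d k : ℝ) * θ α k : ℝ) : Circle1) ∈ statCharSet (fun n => (q α n : ℤ)) := by
  intro ε hε
  obtain ⟨j, hj⟩ : ∃ j : ℕ, 4 * C * (1 / 2 : ℝ) ^ j < ε := by
    have hlim := (tendsto_pow_atTop_nhds_zero_of_lt_one (r := (1 / 2 : ℝ)) (by norm_num)
      (by norm_num)).const_mul (4 * C : ℝ)
    rw [mul_zero] at hlim
    exact (hlim.eventually_lt_const hε).exists
  refine (hsupp.biUnion_Icc (2 * j)).mono fun n hn => ?_
  by_contra hfar
  have hzero : ∀ k ∈ Set.Icc (n - 2 * j) (n + 2 * j), d k = 0 := by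
    rintro k ⟨hk₁, hk₂⟩
    by_contra hdk
    exact hfar (Set.mem_biUnion (show k ∈ {k | d k ≠ 0} from hdk) ⟨by omega, by omega⟩)
  have hn' : ε ≤ ‖q α n • ((∑' k, (d k : ℝ) * θ α k : ℝ) : Circle1)‖ := by
    simpa only [Set.mem_ofPred_eq, natCast_zsmul] using hn
  exact (hn'.trans (norm_q_smul_tsum_le hα hirr hd hzero)).not_gt hj

/-- **Proposition 2.6.** If `supp(β)` has natural density zero then `β ∈ t^s_(qₙ)(𝕋)`. -/
theorem stmt_7 (α : ℝ) (hα : α ∈ Set.Ioo (0 : ℝ) 1) (hirr : Irrational α)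
    (d : ℕ → ℕ) (hd0 : d 0 < a α 1) (hdk : ∀ k, 1 ≤ k → d k ≤ a α (k + 1))
    (hcarry : ∀ k, 1 ≤ k → d k = a α (k + 1) → d (k - 1) = 0)
    (β : ℝ) (hβ : β = ∑' k : ℕ, (d k : ℝ) * θ α k)
    (hsupp : DensityZero {k : ℕ | d k ≠ 0}) :
    (↑β : Circle1) ∈ statCharSet (fun n => (q α n : ℤ)) := by
  have hd : ∀ k, |(d k : ℤ)| ≤ (1 : ℕ) * a α (k + 1) := fun k => by
    rcases k.eq_zero_or_pos with rfl | hk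
    · simpa using hd0.le
    · simpa using hdk k hk
  simpa [hβ] using stmt_7_general hα hirr hd (by simpa using hsupp)
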